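/- Let s ∈ (0,1), let G be a Young function with G' = g satisfying condition (G1) with constants p⁻, p⁺, and let Ω ⊂ ℝⁿ be open and bounded. Let α > 0 and suppose λ is a Dirichlet eigenvalue of the fractional g-Laplacian on Ω with an eigenfunction u ∈ W^{s,G}_0(Ω) satisfying Φ_{s,G}(u) = α and Φ_{G,Ω}(u) = c with c > 0. Then (α·p⁻)/p⁺ ≤ c·λ ≤ (α·p⁺)/p⁻. -/

import Mathlib

open MeasureTheory Filter Set Topology
open scoped ENNReal

noncomputable section

abbrev Eu (n : ℕ) := EuclideanSpace ℝ (Fin n)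

/-- sgn(t) = t/|t| for t ≠ 0, sgn(0)=0. -/
def rsgn (t : ℝ) : ℝ := if t = 0 then 0 else t / |t|

/-- `G` is a Young function with right-continuous density `g = G'`. -/
structure IsYoungPair (G g : ℝ → ℝ) : Prop where
  g_zero : g 0 = 0
  g_pos : ∀ t > 0, 0 < g t
  g_mono : MonotoneOn g (Ici (0:ℝ))
  g_rightCont : ∀ t ≥ (0:ℝ), ContinuousWithinAt g (Ici t) t
  g_tendsto : Tendsto g atTop atTop
  G_eq : ∀ t ≥ (0:ℝ), G t = ∫ τ in (0:ℝ)..t, g τ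

/-- Condition (G1): `1 < p⁻ ≤ p⁺ < ∞` and `p⁻ ≤ t g(t)/G(t) ≤ p⁺` for `t > 0`. -/
def CondG1 (G g : ℝ → ℝ) (pm pp : ℝ) : Prop :=
  1 < pm ∧ pm ≤ pp ∧ ∀ t > 0, pm ≤ t * g t / G t ∧ t * g t / G t ≤ pp

/-- Condition (G2): `t ↦ G (√ t)` is convex on `[0,∞)`. -/
def CondG2 (G : ℝ → ℝ) : Prop := ConvexOn ℝ (Ici (0:ℝ)) (fun t => G (Real.sqrt t))

/-- Condition (G3). -/
def CondG3 (G : ℝ → ℝ) (n : ℕ) (s : ℝ) : Prop :=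
  ∃ Ginv : ℝ → ℝ, (∀ t ≥ (0:ℝ), Ginv (G t) = t) ∧ (∀ t ≥ (0:ℝ), G (Ginv t) = t) ∧
    IntegrableOn (fun τ => Ginv τ / τ ^ (((n : ℝ) + s) / n)) (Ioo 0 1) ∧
    ¬ IntegrableOn (fun τ => Ginv τ / τ ^ (((n : ℝ) + s) / n)) (Ioi 1)

/-- The modular `Φ_{G,Ω}(u) = ∫_Ω G(|u|) dx`. -/
def PhiG (n : ℕ) (G : ℝ → ℝ) (Ω : Set (Eu n)) (u : Eu n → ℝ) : ℝ≥0∞ :=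
  ∫⁻ x in Ω, ENNReal.ofReal (G |u x|)

/-- The s-Hölder quotient. -/
def Ds (n : ℕ) (s : ℝ) (u : Eu n → ℝ) (x y : Eu n) : ℝ := (u x - u y) / ‖x - y‖ ^ s

/-- The fractional modular `Φ_{s,G}(u) = ∬ G(|D_s u|) dμ`, `dμ = dx dy/|x-y|ⁿ`. -/
def PhisG (n : ℕ) (s : ℝ) (G : ℝ → ℝ) (u : Eu n → ℝ) : ℝ≥0∞ :=
  ∫⁻ p : Eu n × Eu n, ENNReal.ofReal (G |Ds n s u p.1 p.2| / ‖p.1 - p.2‖ ^ (n : ℝ))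

/-- Luxemburg norm on `L^G(Ω)`. -/
def luxNorm (n : ℕ) (G : ℝ → ℝ) (Ω : Set (Eu n)) (u : Eu n → ℝ) : ℝ :=
  sInf {l : ℝ | 0 < l ∧ PhiG n G Ω (fun x => u x / l) ≤ 1}

/-- Gagliardo `(s,G)`-seminorm. -/
def gagliardo (n : ℕ) (s : ℝ) (G : ℝ → ℝ) (u : Eu n → ℝ) : ℝ :=
  sInf {l : ℝ | 0 < l ∧ PhisG n s G (fun x => u x / l) ≤ 1}

/-- Membership in `W^{s,G}_0(Ω)`. -/
def MemW0 (n : ℕ) (s : ℝ) (G : ℝ → ℝ) (Ω : Set (Eu n)) (u : Eu n → ℝ) : Prop :=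
  Measurable u ∧ PhiG n G univ u < ⊤ ∧ PhisG n s G u < ⊤ ∧
    ∀ᵐ x : Eu n ∂volume, x ∉ Ω → u x = 0

/-- `λ` is a Dirichlet eigenvalue of the fractional g-Laplacian with eigenfunction `u`. -/
def DirichletEigen (n : ℕ) (s : ℝ) (G g : ℝ → ℝ) (Ω : Set (Eu n)) (lam : ℝ)
    (u : Eu n → ℝ) : Prop :=
  MemW0 n s G Ω u ∧ ¬ (u =ᵐ[(volume : Measure (Eu n))] (fun _ => (0:ℝ))) ∧
  ∀ v : Eu n → ℝ, MemW0 n s G Ω v →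
    (∫ p : Eu n × Eu n,
        g |Ds n s u p.1 p.2| * rsgn (Ds n s u p.1 p.2) * Ds n s v p.1 p.2 / ‖p.1 - p.2‖ ^ (n : ℝ))
      = lam * ∫ x in Ω, g |u x| * rsgn (u x) * v x

/-- `Ω` has Lipschitz (`C^{0,1}`) boundary: locally, `Ω` is bi-Lipschitz equivalent to a halfspace. -/
def HasLipschitzBoundary (n : ℕ) (Ω : Set (Eu n)) : Prop :=
  ∀ x ∈ frontier Ω, ∃ U : Set (Eu n), IsOpen U ∧ x ∈ U ∧
    ∃ φ ψ : Eu n → Eu n, (∃ K, LipschitzWith K φ) ∧ (∃ K, LipschitzWith K ψ) ∧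
      (∀ y ∈ U, ψ (φ y) = y) ∧
      ∃ e : Eu n, e ≠ 0 ∧ ∀ y ∈ U, (y ∈ Ω ↔ 0 < @inner ℝ _ _ e (φ y))

/-- Complementary Young function `G̃(t) = sup{t w − G(w) : w > 0}`. -/
def complYoung (G : ℝ → ℝ) (t : ℝ) : ℝ := sSup {y : ℝ | ∃ w > (0:ℝ), y = t * w - G w}

/-- Modular over `ℝ²ⁿ ∖ (Ωᶜ × Ωᶜ)`. -/
def PhisGStar (n : ℕ) (s : ℝ) (G : ℝ → ℝ) (Ω : Set (Eu n)) (u : Eu n → ℝ) : ℝ≥0∞ :=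
  ∫⁻ p in {p : Eu n × Eu n | p.1 ∈ Ω ∨ p.2 ∈ Ω},
    ENNReal.ofReal (G |Ds n s u p.1 p.2| / ‖p.1 - p.2‖ ^ (n : ℝ))

/-- The boundary modular `∫_{ℝⁿ∖Ω} β G(|u|)`. -/
def PhiGBeta (n : ℕ) (G : ℝ → ℝ) (Ω : Set (Eu n)) (β : Eu n → ℝ) (u : Eu n → ℝ) : ℝ≥0∞ :=
  ∫⁻ x in Ωᶜ, ENNReal.ofReal (β x * G |u x|)

/-- The functional `J_β`. -/
def Jbeta (n : ℕ) (s : ℝ) (G : ℝ → ℝ) (Ω : Set (Eu n)) (β : Eu n → ℝ) (u : Eu n → ℝ) : ℝ≥0∞ :=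
  PhisGStar n s G Ω u + PhiGBeta n G Ω β u

/-- Membership in the space `X_β(Ω)`. -/
def MemXbeta (n : ℕ) (s : ℝ) (G : ℝ → ℝ) (Ω : Set (Eu n)) (β : Eu n → ℝ) (u : Eu n → ℝ) :
    Prop :=
  Measurable u ∧ PhisGStar n s G Ω u < ⊤ ∧ PhiG n G Ω u < ⊤ ∧ PhiGBeta n G Ω β u < ⊤

/-- Luxemburg-type norm associated to the modular `PhiGBeta`. -/
def luxNormBeta (n : ℕ) (G : ℝ → ℝ) (Ω : Set (Eu n)) (β : Eu n → ℝ) (u : Eu n → ℝ) : ℝ :=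
  sInf {l : ℝ | 0 < l ∧ PhiGBeta n G Ω β (fun x => u x / l) ≤ 1}

/-- Seminorm associated to `PhisGStar`. -/
def gagliardoStar (n : ℕ) (s : ℝ) (G : ℝ → ℝ) (Ω : Set (Eu n)) (u : Eu n → ℝ) : ℝ :=
  sInf {l : ℝ | 0 < l ∧ PhisGStar n s G Ω (fun x => u x / l) ≤ 1}

/-- Norm of the space `X_β(Ω)`. -/
def XbetaNorm (n : ℕ) (s : ℝ) (G : ℝ → ℝ) (Ω : Set (Eu n)) (β : Eu n → ℝ) (u : Eu n → ℝ) : ℝ :=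
  gagliardoStar n s G Ω u + luxNorm n G Ω u + luxNormBeta n G Ω β u

/-- `λ` is a Robin eigenvalue with eigenfunction `u`. -/
def RobinEigen (n : ℕ) (s : ℝ) (G g : ℝ → ℝ) (Ω : Set (Eu n)) (β : Eu n → ℝ) (lam : ℝ)
    (u : Eu n → ℝ) : Prop :=
  MemXbeta n s G Ω β u ∧ ¬ (u =ᵐ[(volume : Measure (Eu n))] (fun _ => (0:ℝ))) ∧
  ∀ v : Eu n → ℝ, MemXbeta n s G Ω β v →
    (∫ p in {p : Eu n × Eu n | p.1 ∈ Ω ∨ p.2 ∈ Ω},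
        g |Ds n s u p.1 p.2| * rsgn (Ds n s u p.1 p.2) * Ds n s v p.1 p.2 / ‖p.1 - p.2‖ ^ (n : ℝ))
      = lam * (∫ x in Ω, g |u x| * rsgn (u x) * v x)
          - ∫ x in Ωᶜ, β x * (g |u x| * rsgn (u x) * v x)

/-- Sequential compactness of `K` with respect to a distance-like function `d`. -/
def SeqCompactD {X : Type*} (d : X → X → ℝ) (K : Set X) : Prop :=
  ∀ f : ℕ → X, (∀ j, f j ∈ K) → ∃ u ∈ K, ∃ φ : ℕ → ℕ, StrictMono φ ∧
    Tendsto (fun j => d (f (φ j)) u) atTop (𝓝 (0:ℝ))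

/-- `h` is sequentially continuous on `K` with respect to `d`. -/
def SeqContOnD {X Y : Type*} [TopologicalSpace Y] (d : X → X → ℝ) (K : Set X) (h : X → Y) :
    Prop :=
  ∀ f : ℕ → X, ∀ u, (∀ j, f j ∈ K) → u ∈ K →
    Tendsto (fun j => d (f j) u) atTop (𝓝 (0:ℝ)) →
    Tendsto (fun j => h (f j)) atTop (𝓝 (h u))

/-- The Krasnoselskii genus of `K` is at least `k`: every continuous odd map
`h : K → ℝᵐ ∖ {0}` forces `m ≥ k`. -/
def GenusGeD {X : Type*} [Neg X] (d : X → X → ℝ) (K : Set X) (k : ℕ) : Prop :=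
  ∀ m : ℕ, ∀ h : X → (Fin m → ℝ),
    SeqContOnD d K h → (∀ u ∈ K, h (-u) = - h u) → (∀ u ∈ K, h u ≠ 0) → k ≤ m

/-!
Testing the weak equation with the eigenfunction itself gives `E = λ B`, where `E` and `B` are the
integrals of `t g(t)` along `|D_s u|` and `|u|`. By (G1) the function `t g(t)` lies between
`p⁻ G(t)` and `p⁺ G(t)`, so `E` is comparable to `α` and `B` to `c` with the same constants, and
the two comparisons combine to an estimate of `c λ` in terms of `α`.
-/

lemma mul_mem_Icc_of_comparable {K : Type*} [Field K] [LinearOrder K] [IsStrictOrderedRing K]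
    {p q α c l B : K} (hp : 0 < p) (hq : 0 < q) (hα : 0 ≤ α) (hc : 0 ≤ c)
    (hE : l * B ∈ Icc (p * α) (q * α)) (hB : B ∈ Icc (p * c) (q * c)) :
    c * l ∈ Icc (α * p / q) (α * q / p) := by
  rw [mem_Icc, div_le_iff₀ hq, le_div_iff₀ hp]
  rcases ((mul_nonneg hp.le hc).trans hB.1).eq_or_lt with rfl | hB_pos
  · have hα_zero : α = 0 := by nlinarith [hE.1]
    have hc_zero : c = 0 := by nlinarith [hB.1]
    simp only [hα_zero, hc_zero, zero_mul, le_refl, and_self]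
  · have hl : 0 ≤ l := nonneg_of_mul_nonneg_left ((mul_nonneg hp.le hα).trans hE.1) hB_pos
    constructor
    · calc α * p = p * α := mul_comm α p
        _ ≤ l * B := hE.1
        _ ≤ l * (q * c) := mul_le_mul_of_nonneg_left hB.2 hl
        _ = c * l * q := by ring
    · calc c * l * p = l * (p * c) := by ring
        _ ≤ l * B := mul_le_mul_of_nonneg_left hB.1 hl
        _ ≤ q * α := hE.2
        _ = α * q := mul_comm q α

lemma rsgn_mul_self (t : ℝ) : rsgn t * t = |t| := by
  rw [rsgn]
  split_ifs with ht
  · rw [ht, mul_zero, abs_zero]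
  · rw [div_mul_eq_mul_div, ← abs_mul_abs_self, mul_self_div_self]

lemma measurable_comp_abs_of_monotoneOn {β : Type*} [LinearOrder β] [TopologicalSpace β]
    [OrderTopology β] [MeasurableSpace β] [BorelSpace β] [SecondCountableTopology β]
    {f : ℝ → β} (hf : MonotoneOn f (Ici 0)) : Measurable fun t => f |t| := by
  have hmono : Monotone fun t => f (max 0 t) := fun a b hab =>
    hf (le_max_left 0 a) (le_max_left 0 b) (max_le_max_left 0 hab)
  simpa only [Function.comp_def, max_eq_right (abs_nonneg (_ : ℝ))]
    using hmono.measurable.comp (continuous_abs (G := ℝ)).measurable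

lemma integral_mem_Icc_of_mul_le {X : Type*} [MeasurableSpace X] {μ : Measure X} {f h : X → ℝ}
    {a b : ℝ} (hf : AEStronglyMeasurable f μ) (hh : AEStronglyMeasurable h μ)
    (h_nonneg : 0 ≤ᵐ[μ] h) (h_fin : ∫⁻ x, ENNReal.ofReal (h x) ∂μ ≠ ∞)
    (h_lower : ∀ᵐ x ∂μ, a * h x ≤ f x) (h_upper : ∀ᵐ x ∂μ, f x ≤ b * h x) :
    ∫ x, f x ∂μ ∈ Icc (a * (∫⁻ x, ENNReal.ofReal (h x) ∂μ).toReal)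
      (b * (∫⁻ x, ENNReal.ofReal (h x) ∂μ).toReal) := by
  have hh_int : Integrable h μ := (lintegral_ofReal_ne_top_iff_integrable hh h_nonneg).1 h_fin
  have hf_int : Integrable f μ :=
    integrable_of_le_of_le hf h_lower h_upper (hh_int.const_mul a) (hh_int.const_mul b)
  rw [← integral_eq_lintegral_of_nonneg_ae h_nonneg hh, ← integral_const_mul,
    ← integral_const_mul]
  exact ⟨integral_mono_ae (hh_int.const_mul a) hf_int h_lower,
    integral_mono_ae hf_int (hh_int.const_mul b) h_upper⟩

section YoungFunction

variable {G g : ℝ → ℝ} {pm pp : ℝ}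

namespace IsYoungPair

lemma intervalIntegrable (hY : IsYoungPair G g) {a b : ℝ} (ha : 0 ≤ a) (hb : 0 ≤ b) :
    IntervalIntegrable g volume a b :=
  (hY.g_mono.mono fun _ hx => (le_min ha hb).trans hx.1).intervalIntegrable

lemma map_zero (hY : IsYoungPair G g) : G 0 = 0 := by
  rw [hY.G_eq 0 le_rfl, intervalIntegral.integral_same]

lemma strictMonoOn (hY : IsYoungPair G g) : StrictMonoOn G (Ici 0) := by
  intro a ha b hb hab
  have h_pos : 0 < ∫ τ in a..b, g τ :=
    intervalIntegral.intervalIntegral_pos_of_pos_on (hY.intervalIntegrable ha hb)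
      (fun τ hτ => hY.g_pos τ (lt_of_le_of_lt ha hτ.1)) hab
  rwa [← intervalIntegral.integral_interval_sub_left (hY.intervalIntegrable le_rfl hb)
    (hY.intervalIntegrable le_rfl ha), ← hY.G_eq b hb, ← hY.G_eq a ha, sub_pos] at h_pos

lemma pos (hY : IsYoungPair G g) {t : ℝ} (ht : 0 < t) : 0 < G t :=
  hY.map_zero ▸ hY.strictMonoOn self_mem_Ici ht.le ht

lemma nonneg (hY : IsYoungPair G g) {t : ℝ} (ht : 0 ≤ t) : 0 ≤ G t :=
  hY.map_zero ▸ hY.strictMonoOn.monotoneOn self_mem_Ici ht ht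

lemma mul_density_mem_Icc (hY : IsYoungPair G g) (hG1 : CondG1 G g pm pp) {t : ℝ} (ht : 0 ≤ t) :
    t * g t ∈ Icc (pm * G t) (pp * G t) := by
  rcases ht.eq_or_lt with rfl | ht
  · simp only [hY.map_zero, zero_mul, mul_zero, Icc_self, mem_singleton_iff]
  · exact ⟨(le_div_iff₀ (hY.pos ht)).1 (hG1.2.2 t ht).1,
      (div_le_iff₀ (hY.pos ht)).1 (hG1.2.2 t ht).2⟩

lemma integral_mul_density_mem_Icc {X : Type*} [MeasurableSpace X] {μ : Measure X}
    (hY : IsYoungPair G g) (hG1 : CondG1 G g pm pp) {w k : X → ℝ}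
    (hw : AEMeasurable w μ) (hk : AEMeasurable k μ) (hk_nonneg : ∀ x, 0 ≤ k x)
    (h_fin : ∫⁻ x, ENNReal.ofReal (G |w x| / k x) ∂μ ≠ ∞) :
    ∫ x, |w x| * g |w x| / k x ∂μ ∈
      Icc (pm * (∫⁻ x, ENNReal.ofReal (G |w x| / k x) ∂μ).toReal)
        (pp * (∫⁻ x, ENNReal.ofReal (G |w x| / k x) ∂μ).toReal) := by
  have hG_meas : AEMeasurable (fun x => G |w x|) μ :=
    (measurable_comp_abs_of_monotoneOn hY.strictMonoOn.monotoneOn).comp_aemeasurable hw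
  have hg_meas : AEMeasurable (fun x => g |w x|) μ :=
    (measurable_comp_abs_of_monotoneOn hY.g_mono).comp_aemeasurable hw
  have h_bounds (x : X) := hY.mul_density_mem_Icc hG1 (abs_nonneg (w x))
  refine integral_mem_Icc_of_mul_le ((hw.abs.mul hg_meas).div hk).aestronglyMeasurable
    (hG_meas.div hk).aestronglyMeasurable
    (.of_forall fun x => div_nonneg (hY.nonneg (abs_nonneg _)) (hk_nonneg x)) h_fin
    (.of_forall fun x => ?_) (.of_forall fun x => ?_)
  · rw [← mul_div_assoc]
    exact div_le_div_of_nonneg_right (h_bounds x).1 (hk_nonneg x)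
  · rw [← mul_div_assoc]
    exact div_le_div_of_nonneg_right (h_bounds x).2 (hk_nonneg x)

end IsYoungPair

end YoungFunction

section Eigenvalue

variable {n : ℕ} {s : ℝ} {G g : ℝ → ℝ} {pm pp : ℝ} {Ω : Set (Eu n)} {u : Eu n → ℝ}

lemma measurable_Ds (hu : Measurable u) : Measurable fun p : Eu n × Eu n => Ds n s u p.1 p.2 := by
  unfold Ds
  fun_prop

lemma IsYoungPair.integral_mul_density_mem_Icc_PhisG (hY : IsYoungPair G g)
    (hG1 : CondG1 G g pm pp) (hu : Measurable u) (h_fin : PhisG n s G u ≠ ∞) :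
    ∫ p : Eu n × Eu n, |Ds n s u p.1 p.2| * g |Ds n s u p.1 p.2| / ‖p.1 - p.2‖ ^ (n : ℝ) ∈
      Icc (pm * (PhisG n s G u).toReal) (pp * (PhisG n s G u).toReal) :=
  hY.integral_mul_density_mem_Icc hG1 (measurable_Ds hu).aemeasurable (by fun_prop)
    (fun _ => by positivity) h_fin

lemma IsYoungPair.integral_mul_density_mem_Icc_PhiG (hY : IsYoungPair G g)
    (hG1 : CondG1 G g pm pp) (hu : Measurable u) (h_fin : PhiG n G Ω u ≠ ∞) :
    ∫ x in Ω, |u x| * g |u x| ∈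
      Icc (pm * (PhiG n G Ω u).toReal) (pp * (PhiG n G Ω u).toReal) := by
  simpa only [PhiG, div_one] using
    hY.integral_mul_density_mem_Icc (k := fun _ => 1) hG1 hu.aemeasurable aemeasurable_const
      (fun _ => zero_le_one) (by simpa only [PhiG, div_one] using h_fin)

lemma MemW0.PhiG_ne_top (hu : MemW0 n s G Ω u) : PhiG n G Ω u ≠ ∞ :=
  ((lintegral_mono_set (subset_univ Ω)).trans_lt hu.2.1).ne

lemma DirichletEigen.energy_identity {lam : ℝ} (heig : DirichletEigen n s G g Ω lam u) :
    ∫ p : Eu n × Eu n, |Ds n s u p.1 p.2| * g |Ds n s u p.1 p.2| / ‖p.1 - p.2‖ ^ (n : ℝ) =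
      lam * ∫ x in Ω, |u x| * g |u x| := by
  have h_test := heig.2.2 u heig.1
  simpa only [mul_assoc, rsgn_mul_self, mul_comm |_|] using h_test

end Eigenvalue

theorem statement11_general {n : ℕ} {s : ℝ} {G g : ℝ → ℝ} {pm pp : ℝ}
    (hY : IsYoungPair G g) (hG1 : CondG1 G g pm pp) {Ω : Set (Eu n)} {lam : ℝ} {u : Eu n → ℝ}
    (heig : DirichletEigen n s G g Ω lam u) :
    (PhisG n s G u).toReal * pm / pp ≤ (PhiG n G Ω u).toReal * lam ∧
      (PhiG n G Ω u).toReal * lam ≤ (PhisG n s G u).toReal * pp / pm := by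
  have hu : MemW0 n s G Ω u := heig.1
  have hpm : 0 < pm := zero_lt_one.trans hG1.1
  have hE := hY.integral_mul_density_mem_Icc_PhisG hG1 hu.1 hu.2.2.1.ne
  have hB := hY.integral_mul_density_mem_Icc_PhiG hG1 hu.1 hu.PhiG_ne_top
  rw [heig.energy_identity] at hE
  exact mul_mem_Icc_of_comparable hpm (hpm.trans_le hG1.2.1) ENNReal.toReal_nonneg
    ENNReal.toReal_nonneg hE hB

/-- Theorem 1.4, first part: `α p⁻/p⁺ ≤ c·λ ≤ α p⁺/p⁻`. -/
theorem statement11 (n : ℕ) (s : ℝ) (hs : s ∈ Ioo (0:ℝ) 1) (G g : ℝ → ℝ) (pm pp : ℝ)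
    (hY : IsYoungPair G g) (hG1 : CondG1 G g pm pp)
    (Ω : Set (Eu n)) (hΩo : IsOpen Ω) (hΩb : Bornology.IsBounded Ω)
    (α c : ℝ) (hα : 0 < α) (hc : 0 < c) (lam : ℝ) (u : Eu n → ℝ)
    (heig : DirichletEigen n s G g Ω lam u)
    (h1 : PhisG n s G u = ENNReal.ofReal α) (h2 : PhiG n G Ω u = ENNReal.ofReal c) :
    α * pm / pp ≤ c * lam ∧ c * lam ≤ α * pp / pm := by
  simpa only [h1, h2, ENNReal.toReal_ofReal hα.le, ENNReal.toReal_ofReal hc.le] using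
    statement11_general hY hG1 heig
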